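/- arXiv:1301.1235 — 2 statements merged into one kernel-verified Lean document; each statement's English description precedes it below -/
import Mathlib

section
/- Assume the vertex c is controllable. Then, with δ_{cv} the adjusting shifts, for every equivalence class 𝒯_i the vector field ∑_{v∈𝒯_i} (q_c − q_v + δ_{cv}) ∂_{p_v} belongs to 𝓜. -/
/-!
Write `x_v = q_c - q_v + δ_{cv}` and call a tuple `g = (g_v)` of real polynomials *admissible* if
the vector field `∑_{v ∈ 𝒯} g_v(x_v) ∂_{p_v}` lies in `𝓜`. Everything is deduced from four facts
about the admissible tuples (`admissible`, `admissible_derivClosed`, `ft_mem_admissible`):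

* they form a real vector space;
* bracketing with `∂_{q_c}` shows that `g'` is admissible when `g` is;
* the double bracket `[h, [g, X₀]]` equals the field of `(g h)'`, so that `(g h)'` is admissible
  when `g` and `h` are;
* the tuple `f̃ = (f̃_v)` is admissible, because `[∂_{q_c}, X₀]` is its field up to a smooth
  multiple of `∂_{p_c}`.

The rest is algebra in `V → ℝ[X]`. If `s X = (s_v X)` is admissible, then so is the image of an
admissible tuple under the operator `h ↦ (s X h)'`, which multiplies the monomial `X ^ n` at `v` by
`s_v (n + 1)`. By interpolation every function of this operator preserves admissibility
(`DerivClosed.calculus`).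

Let `k` be the largest degree of the `f̃_v`. As `f̃_v` is adjusted, the components of degree `k`
contribute `α_v X` to the `(k-1)`-st derivative of `f̃`, and those of degree `k-1` contribute
constants; the operation `(h h)'` kills these constants and leaves `2 α² X`. Functional calculus
turns this into `e X`, with `e` the indicator function of `{v | deg f̃_v = k}`
(`DerivClosed.top_mem`). Functional calculus with `s = e` then cuts these components off, so
that all smaller degrees are reached (`DerivClosed.trunc_mem`), and extracts each monomial
`e_v b_{v,n} X ^ n` of `f̃` on this set. From these one gets `e b_n X` for every `n`: by derivatives
for `n ≥ 1`; for `n = 0` by multiplying the constant with `e X ^ k` if `k ≥ 2`, while `b_0 = 0` by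
adjustedness if `k = 1`. Functional calculus with `s = e b_n`, for `n = 0, …, k`, cuts out
the set where all coefficients agree with those of `f̃_{v₀}` (`DerivClosed.level_mem`). By
`polyEquiv_iff` this set is the equivalence class of `v₀`.
-/

open scoped Classical
open Polynomial

noncomputable section

/-- Phase space ℝ^{2|V|}: positions `q = x.1` and momenta `p = x.2`. -/
abbrev Phase (V : Type) := (V → ℝ) × (V → ℝ)

/-- Lie bracket of vector fields: `[Y,Z](x) = DZ(x)·Y(x) − DY(x)·Z(x)`. -/
def lieB {V : Type} [Fintype V] (Y Z : Phase V → Phase V) : Phase V → Phase V :=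
  fun x => fderiv ℝ Z x (Y x) - fderiv ℝ Y x (Z x)

/-- The constant vector field `∂_{p_v}`. -/
def dp {V : Type} [Fintype V] [DecidableEq V] (v : V) : Phase V → Phase V :=
  fun _ => (0, Pi.single v 1)

/-- The constant vector field `∂_{q_v}`. -/
def dq {V : Type} [Fintype V] [DecidableEq V] (v : V) : Phase V → Phase V :=
  fun _ => (Pi.single v 1, 0)

/-- The constant vector field `∑_{v ∈ A} ∂_{p_v}`. -/
def dpSum {V : Type} [Fintype V] [DecidableEq V] (A : Finset V) : Phase V → Phase V :=
  fun _ => (0, ∑ v ∈ A, Pi.single v 1)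

/-- The constant vector field `∑_{v ∈ A} ∂_{q_v}`. -/
def dqSum {V : Type} [Fintype V] [DecidableEq V] (A : Finset V) : Phase V → Phase V :=
  fun _ => (∑ v ∈ A, Pi.single v 1, 0)

/-- The drift vector field
`X₀ = −∑_{v∈V*} γ_v p_v ∂_{p_v} + ∑_{v∈V} (p_v ∂_{q_v} − U_v'(q_v) ∂_{p_v})
      − ∑_{{u,v}∈E} V_{uv}'(q_u − q_v)(∂_{p_u} − ∂_{p_v})`,
written componentwise (using the symmetry `V_{vu}(x) = V_{uv}(−x)` of the
interaction potentials, the `∂_{p_v}`-component of the edge term at a vertex `v` is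
`−∑_{w ~ v} V_{vw}'(q_v − q_w)`). -/
def X0 {V : Type} [Fintype V] [DecidableEq V] (G : SimpleGraph V) [DecidableRel G.Adj]
    (γ : V → ℝ) (U : V → ℝ → ℝ) (Vp : V → V → Polynomial ℝ) : Phase V → Phase V :=
  fun x =>
    (x.2, fun v =>
      -(γ v) * x.2 v - deriv (U v) (x.1 v) -
        ∑ w ∈ Finset.univ.filter (fun w => G.Adj v w),
          (derivative (Vp v w)).eval (x.1 v - x.1 w))

/-- The smallest collection `𝓜` of vector fields on `ℝ^{2|V|}` that contains `∂_{p_v}`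
for every `v ∈ V*`, and is closed under linear combinations, Lie brackets,
bracketing with `X₀`, and multiplication by smooth scalar functions. -/
inductive MM {V : Type} [Fintype V] [DecidableEq V] (Vstar : Finset V)
    (X₀ : Phase V → Phase V) : (Phase V → Phase V) → Prop
  | basic (v : V) (hv : v ∈ Vstar) : MM Vstar X₀ (dp v)
  | add {Y Z : Phase V → Phase V} : MM Vstar X₀ Y → MM Vstar X₀ Z → MM Vstar X₀ (Y + Z)
  | smul (a : ℝ) {Y : Phase V → Phase V} : MM Vstar X₀ Y → MM Vstar X₀ (a • Y)
  | lie {Y Z : Phase V → Phase V} : MM Vstar X₀ Y → MM Vstar X₀ Z → MM Vstar X₀ (lieB Y Z)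
  | lieX {Y : Phase V → Phase V} : MM Vstar X₀ Y → MM Vstar X₀ (lieB Y X₀)
  | mulS (f : Phase V → ℝ) (hf : ContDiff ℝ (⊤ : ℕ∞) f) {Y : Phase V → Phase V} :
      MM Vstar X₀ Y → MM Vstar X₀ (fun x => f x • Y x)

/-- A vertex `v` is controllable if `∂_{q_v} ∈ 𝓜` and `∂_{p_v} ∈ 𝓜`. -/
def Controllable {V : Type} [Fintype V] [DecidableEq V] (Vstar : Finset V)
    (X₀ : Phase V → Phase V) (v : V) : Prop :=
  MM Vstar X₀ (dq v) ∧ MM Vstar X₀ (dp v)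

/-- Two polynomials are equivalent if `f(·) = g(· + δ)` for some `δ ∈ ℝ`. -/
def PolyEquiv (f g : Polynomial ℝ) : Prop :=
  ∃ δ : ℝ, ∀ x : ℝ, f.eval x = g.eval (x + δ)

/-- The set 𝒯 of neighbors ("targets") of a vertex `c`. -/
def Tset {V : Type} [Fintype V] [DecidableEq V] (G : SimpleGraph V) [DecidableRel G.Adj]
    (c : V) : Finset V :=
  Finset.univ.filter fun w => G.Adj c w

/-- The shift making a polynomial `g = ∑ a_i t^i/i!` of degree `k` adjusted
(i.e. killing the coefficient `a_{k−1}`), namely `a_{k−1}/a_k = coeff_{k−1}/(k·coeff_k)`. -/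
def adjShift (g : Polynomial ℝ) : ℝ :=
  g.coeff (g.natDegree - 1) / ((g.natDegree : ℝ) * g.leadingCoeff)

/-- The adjusted representation `g̃(·) = g(· − a_{k−1}/a_k)` of a polynomial `g`. -/
def adjRep (g : Polynomial ℝ) : Polynomial ℝ :=
  g.comp (Polynomial.X - Polynomial.C (adjShift g))

/-- `f̃_v`, the adjusted representation of `V''_{cv}`. -/
def ft {V : Type} (Vp : V → V → Polynomial ℝ) (c v : V) : Polynomial ℝ :=
  adjRep (derivative (derivative (Vp c v)))

/-- `d = max_{v∈𝒯} d_v`, the maximal degree of the adjusted polynomials `f̃_v`, `v ∈ 𝒯`. -/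
def dmax {V : Type} [Fintype V] [DecidableEq V] (G : SimpleGraph V) [DecidableRel G.Adj]
    (Vp : V → V → Polynomial ℝ) (c : V) : ℕ :=
  (Tset G c).sup fun v => (ft Vp c v).natDegree

/-- `D^d = {v ∈ 𝒯 : d_v = d}`, the neighbors of `c` of maximal adjusted degree. -/
def Dd {V : Type} [Fintype V] [DecidableEq V] (G : SimpleGraph V) [DecidableRel G.Adj]
    (Vp : V → V → Polynomial ℝ) (c : V) : Finset V :=
  (Tset G c).filter fun v => (ft Vp c v).natDegree = dmax G Vp c

/-- The coefficient `b_{vℓ}` in `f̃_v(x) = ∑_j b_{vj} x^j/j!`, i.e. `b_{vℓ} = ℓ!·coeff_ℓ(f̃_v)`. -/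
def bcoef {V : Type} (Vp : V → V → Polynomial ℝ) (c v : V) (ℓ : ℕ) : ℝ :=
  (Nat.factorial ℓ : ℝ) * (ft Vp c v).coeff ℓ

/-- The scalar function `x_v = q_c − q_v + δ_{cv}`, with `δ_{cv}` the adjusting shift
of `V''_{cv}`. -/
def xv {V : Type} [Fintype V] (Vp : V → V → Polynomial ℝ) (c v : V) : Phase V → ℝ :=
  fun x => x.1 c - x.1 v + adjShift (derivative (derivative (Vp c v)))

/-! ### Tuples of polynomials -/

section Algebra

variable {V : Type}

/-- The two closure properties of the admissible tuples of polynomials: they are stable under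
the componentwise derivative and under `(g, h) ↦ (g h)'`. -/
structure DerivClosed (A : Submodule ℝ (V → ℝ[X])) : Prop where
  der : ∀ g ∈ A, (fun v => derivative (g v)) ∈ A
  mul : ∀ g ∈ A, ∀ h ∈ A, (fun v => derivative (g v * h v)) ∈ A

/-- Functional calculus for the operator `h ↦ (s X h)'`, which is diagonal on monomials with
eigenvalues `s v * (n + 1)`: since only finitely many eigenvalues occur in `h`, an arbitrary
function `φ` of the operator is interpolated by a polynomial. -/
lemma DerivClosed.calculus [Fintype V] {A : Submodule ℝ (V → ℝ[X])} (hA : DerivClosed A)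
    {s : V → ℝ} (hs : (fun v => C (s v) * X) ∈ A) {h : V → ℝ[X]} (hh : h ∈ A) (φ : ℝ → ℝ)
    {r : V → ℝ[X]} (hr : ∀ v n, (r v).coeff n = φ (s v * (n + 1)) * (h v).coeff n) : r ∈ A := by
  have hpow : ∀ m : ℕ, ∃ r ∈ A, ∀ v n,
      (r v).coeff n = (s v * ((n : ℝ) + 1)) ^ m * (h v).coeff n := by
    intro m
    induction m with
    | zero => exact ⟨h, hh, by simp⟩
    | succ m ih =>
      obtain ⟨r, hrA, hr⟩ := ih
      refine ⟨_, hA.mul _ hs _ hrA, fun v n => ?_⟩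
      rw [coeff_derivative, mul_assoc, coeff_C_mul, coeff_X_mul, hr]
      ring
  have hpoly : ∀ p : ℝ[X], ∃ r ∈ A, ∀ v n,
      (r v).coeff n = p.eval (s v * ((n : ℝ) + 1)) * (h v).coeff n := by
    intro p
    induction p using Polynomial.induction_on' with
    | add p q hp hq =>
      obtain ⟨r, hrA, hr⟩ := hp
      obtain ⟨t, htA, ht⟩ := hq
      refine ⟨r + t, A.add_mem hrA htA, fun v n => ?_⟩
      simp only [Pi.add_apply, coeff_add, hr, ht, eval_add]
      ring
    | monomial m a =>
      obtain ⟨r, hrA, hr⟩ := hpow m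
      refine ⟨a • r, A.smul_mem a hrA, fun v n => ?_⟩
      simp only [Pi.smul_apply, coeff_smul, hr, eval_monomial, smul_eq_mul]
      ring
  let N : ℕ := Finset.univ.sup fun v => (h v).natDegree
  let Λ : Finset ℝ :=
    (Finset.univ ×ˢ Finset.range (N + 1)).image fun a : V × ℕ => s a.1 * ((a.2 : ℝ) + 1)
  obtain ⟨r', hr'A, hr'⟩ := hpoly (Lagrange.interpolate Λ id φ)
  have : r = r' := by
    funext v
    ext n
    rw [hr, hr']
    by_cases hn : n ≤ N
    · have hmem : s v * ((n : ℝ) + 1) ∈ Λ :=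
        Finset.mem_image.2 ⟨(v, n), by simp; omega, rfl⟩
      have := Lagrange.eval_interpolate_at_node (s := Λ) (v := id) φ
        (Function.injective_id.injOn) hmem
      rw [id] at this
      rw [this]
    · have : (h v).natDegree ≤ N :=
        Finset.le_sup (f := fun v => (h v).natDegree) (Finset.mem_univ v)
      rw [coeff_eq_zero_of_natDegree_lt (by omega)]
      simp
  rw [this]
  exact hr'A

lemma DerivClosed.iterate {A : Submodule ℝ (V → ℝ[X])} (hA : DerivClosed A)
    {g : V → ℝ[X]} (hg : g ∈ A) (m : ℕ) : (fun v => derivative^[m] (g v)) ∈ A := by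
  induction m with
  | zero => exact hg
  | succ m ih =>
    simp only [Function.iterate_succ_apply']
    exact hA.der _ ih

lemma DerivClosed.linear_of_pow {A : Submodule ℝ (V → ℝ[X])} (hA : DerivClosed A) (a : V → ℝ)
    (m : ℕ) (h : (fun v => C (a v) * X ^ (m + 1)) ∈ A) : (fun v => C (a v) * X) ∈ A := by
  induction m with
  | zero => simpa using h
  | succ m ih =>
    apply ih
    have h2 := A.smul_mem ((m : ℝ) + 2)⁻¹ (hA.der _ h)
    convert h2 using 1
    funext v
    have : (m : ℝ) + 2 ≠ 0 := by positivity
    ext n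
    simp only [Pi.smul_apply, coeff_smul, derivative_C_mul_X_pow, coeff_C_mul, smul_eq_mul,
      Nat.add_sub_cancel]
    push_cast
    field_simp
    ring

/-- If all components of `g` have degree at most `k + 1`, and those of degree exactly `k + 1` are
adjusted, then `e X` is admissible for `e` the indicator function of the components of degree
exactly `k + 1`. -/
lemma DerivClosed.top_mem [Fintype V] {A : Submodule ℝ (V → ℝ[X])} (hA : DerivClosed A)
    {g : V → ℝ[X]} (hg : g ∈ A) (k : ℕ) (hdeg : ∀ v, (g v).natDegree ≤ k + 1)
    (hadj : ∀ v, (g v).coeff (k + 1) * (g v).coeff k = 0) :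
    (fun v => C (if (g v).coeff (k + 1) = 0 then (0 : ℝ) else 1) * X) ∈ A := by
  have h1 := hA.iterate hg k
  have h2 := hA.mul _ h1 _ h1
  -- `h = g^(k)` has the form `α X + β` with `α β = 0`, so that `(h²)' = 2 α² X`.
  let α : V → ℝ := fun v => ((k + 1).descFactorial k : ℝ) * (g v).coeff (k + 1)
  have hlin : ∀ v, derivative^[k] (g v) =
      C (α v) * X + C ((k.descFactorial k : ℝ) * (g v).coeff k) := by
    intro v
    ext n
    rw [coeff_iterate_derivative]
    rcases n with _ | _ | n
    · simp
    · simp [α, add_comm]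
    · rw [coeff_eq_zero_of_natDegree_lt (by have := hdeg v; omega)]
      simp
  have h3 : (fun v => C (2 * α v ^ 2) * X) ∈ A := by
    convert h2 using 1
    funext v
    rw [hlin]
    have hz : α v * ((k.descFactorial k : ℝ) * (g v).coeff k) = 0 := by
      have := hadj v
      simp only [α]
      linear_combination ((k + 1).descFactorial k : ℝ) * (k.descFactorial k : ℝ) * this
    have hz' := congrArg (C : ℝ → ℝ[X]) hz
    simp only [C_mul, C_0] at hz'
    simp only [derivative_mul, derivative_add, derivative_C, derivative_X, C_mul, C_pow]
    have h2 : (C 2 : ℝ[X]) = 2 := rfl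
    rw [h2]
    linear_combination (-2 : ℝ[X]) * hz'
  refine hA.calculus h3 h3 (fun t => 2 / t) fun v n => ?_
  have hα : α v = 0 ↔ (g v).coeff (k + 1) = 0 := by
    have : ((k + 1).descFactorial k : ℝ) ≠ 0 := by
      rw [Nat.cast_ne_zero, Ne, Nat.descFactorial_eq_zero_iff_lt]
      omega
    simp [α, this]
  rw [coeff_C_mul, coeff_C_mul, coeff_X]
  by_cases h0 : (g v).coeff (k + 1) = 0
  · simp [hα.2 h0, h0]
  · have h0' : α v ≠ 0 := fun h => h0 (hα.1 h)
    by_cases hn : 1 = n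
    · subst hn
      simp only [h0, if_false, if_true]
      field_simp
      norm_num
    · simp [hn]

/-- The tuple `f`, cut down to the components of degree at most `k`, the others being replaced
by zero. -/
def trunc (f : V → ℝ[X]) (k : ℕ) : V → ℝ[X] := fun v => if (f v).natDegree ≤ k then f v else 0

lemma trunc_top (f : V → ℝ[X]) (k : ℕ) (v : V) :
    (trunc f (k + 1) v).coeff (k + 1) = 0 ↔ (f v).natDegree ≠ k + 1 := by
  unfold trunc
  split_ifs with h
  · constructor
    · rintro h0 h1
      rw [← h1, coeff_natDegree, leadingCoeff_eq_zero] at h0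
      simp [h0] at h1
    · intro h1
      exact coeff_eq_zero_of_natDegree_lt (by omega)
  · simp
    omega

lemma DerivClosed.top_trunc [Fintype V] {A : Submodule ℝ (V → ℝ[X])} (hA : DerivClosed A)
    {f : V → ℝ[X]} (hadj : ∀ v k, (f v).natDegree = k + 1 → (f v).coeff k = 0) {k : ℕ}
    (hk : trunc f (k + 1) ∈ A) :
    (fun v => C (if (f v).natDegree = k + 1 then (1 : ℝ) else 0) * X) ∈ A := by
  have := hA.top_mem hk k (fun v => by unfold trunc; split_ifs with h <;> simp [h]) (fun v => by
    by_cases h : (f v).natDegree = k + 1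
    · simp [trunc, h, hadj v k h]
    · rw [(trunc_top f k v).2 h, zero_mul])
  convert this using 3 with v
  simp only [trunc_top]
  split_ifs <;> simp_all

/-- Peeling off the components of top degree, one degree at a time. -/
lemma DerivClosed.trunc_mem [Fintype V] {A : Submodule ℝ (V → ℝ[X])} (hA : DerivClosed A)
    {f : V → ℝ[X]} (hf : f ∈ A) (hadj : ∀ v k, (f v).natDegree = k + 1 → (f v).coeff k = 0)
    (k : ℕ) : trunc f k ∈ A := by
  let N : ℕ := Finset.univ.sup fun v => (f v).natDegree
  have hN : ∀ v, (f v).natDegree ≤ N := fun v =>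
    Finset.le_sup (f := fun v => (f v).natDegree) (Finset.mem_univ v)
  have hbig : ∀ k, N ≤ k → trunc f k ∈ A := by
    intro k hk
    convert hf using 1
    funext v
    exact if_pos ((hN v).trans hk)
  have hdown : ∀ k, trunc f (k + 1) ∈ A → trunc f k ∈ A := by
    intro k hk
    have he := hA.top_trunc hadj hk
    refine hA.calculus he hk (fun t => if t = 0 then 1 else 0) fun v n => ?_
    have hn : (n : ℝ) + 1 ≠ 0 := by positivity
    unfold trunc
    by_cases h : (f v).natDegree = k + 1
    · simp [h, hn]
    · by_cases h' : (f v).natDegree ≤ k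
      · simp [h, h', h'.trans (Nat.le_succ k)]
      · have : ¬ (f v).natDegree ≤ k + 1 := by omega
        simp [h', this]
  have key : ∀ j k, N ≤ k + j → trunc f k ∈ A := by
    intro j
    induction j with
    | zero => exact hbig
    | succ j ih => exact fun k hk => hdown k (ih (k + 1) (by omega))
  exact key N k (by omega)

/-- An admissible tuple `f` of adjusted polynomials yields the linear field on each of its level
sets, provided the level is not a constant polynomial. -/
theorem DerivClosed.level_mem [Fintype V] {A : Submodule ℝ (V → ℝ[X])} (hA : DerivClosed A)
    {f : V → ℝ[X]} (hf : f ∈ A) (hadj : ∀ v k, (f v).natDegree = k + 1 → (f v).coeff k = 0) (v₀ : V)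
    (hv₀ : (f v₀).natDegree ≠ 0) :
    (fun v => if f v = f v₀ then X else 0) ∈ A := by
  obtain ⟨k, hk⟩ := Nat.exists_eq_succ_of_ne_zero hv₀
  have hT := hA.trunc_mem hf hadj (k + 1)
  have he := hA.top_trunc hadj hT
  let r : ℕ → V → ℝ := fun n v => if (f v).natDegree = k + 1 then (f v).coeff n else 0
  have hmono : ∀ n, (fun v => C (r n v) * X ^ n) ∈ A := by
    intro n
    refine hA.calculus he hT (fun t => if t = n + 1 then 1 else 0) fun v m => ?_
    have hn : (n : ℝ) + 1 ≠ 0 := by positivity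
    by_cases h : (f v).natDegree = k + 1
    · by_cases hm : m = n
      · subst hm
        simp [r, h, trunc]
      · simp [r, h, trunc, hm, coeff_X_pow]
    · simp [r, h, hn.symm]
  have hX : ∀ n, (fun v => C (r n v) * X) ∈ A := by
    rintro (_ | n)
    · rcases k with _ | k
      · -- Adjusted polynomials of degree one have no constant term.
        convert A.zero_mem using 1
        funext v
        by_cases h : (f v).natDegree = 1
        · simp [r, h, hadj v 0 h]
        · simp [r, h]
      · -- In degree at least two, `X ^ (k + 2)` raises the constant to a higher power of `X`.
        have hr := hA.linear_of_pow _ (k + 1) (hmono (k + 2))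
        have hpow : (fun v => C (if (f v).natDegree = k + 2 then (1 : ℝ) else 0) * X ^ (k + 2))
            ∈ A := by
          refine hA.calculus hr (hmono (k + 2)) (fun t => ((k : ℝ) + 3) / t) fun v m => ?_
          by_cases h : (f v).natDegree = k + 2
          · have hl : (f v).coeff (k + 2) ≠ 0 := by
              rw [← h, coeff_natDegree, Ne, leadingCoeff_eq_zero]
              rintro h0
              simp [h0] at h
            by_cases hm : m = k + 2
            · subst hm
              have : (k : ℝ) + 3 ≠ 0 := by positivity
              have : (k : ℝ) + 2 + 1 ≠ 0 := by positivity
              simp [r, h]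
              field_simp
              ring
            · simp [h, hm, coeff_X_pow]
          · simp [r, h]
        have h2 := hA.mul _ (hmono 0) _ hpow
        have h3 : (fun v => C (((k : ℝ) + 2) * r 0 v) * X ^ (k + 1)) ∈ A := by
          convert h2 using 1
          funext v
          by_cases h : (f v).natDegree = k + 2
          · have hC : (C 2 : ℝ[X]) = 2 := rfl
            simp [r, h, hC]
            ring
          · simp [r, h]
        have h4 := A.smul_mem ((k : ℝ) + 2)⁻¹ (hA.linear_of_pow _ k h3)
        convert h4 using 1
        funext v
        have : (k : ℝ) + 2 ≠ 0 := by positivity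
        rw [Pi.smul_apply, ← smul_mul_assoc, smul_C, smul_eq_mul, inv_mul_cancel_left₀ this]
    · exact hA.linear_of_pow _ n (hmono (n + 1))
  have hstep : ∀ j : ℕ, (fun v => C (if (f v).natDegree = k + 1 ∧
      ∀ n < j, (f v).coeff n = (f v₀).coeff n then (1 : ℝ) else 0) * X) ∈ A := by
    intro j
    induction j with
    | zero => simpa using he
    | succ j ih =>
      refine hA.calculus (hX j) ih (fun t => if t = 2 * (f v₀).coeff j then 1 else 0)
        fun v m => ?_
      rw [coeff_C_mul, coeff_C_mul, coeff_X]
      by_cases hm : 1 = m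
      · subst hm
        by_cases h : (f v).natDegree = k + 1
        · have hiff : (f v).coeff j * (((1 : ℕ) : ℝ) + 1) = 2 * (f v₀).coeff j ↔
              (f v).coeff j = (f v₀).coeff j := by
            push_cast
            constructor <;> intro h <;> linarith
          simp only [h, r, if_true, hiff, Nat.lt_succ_iff_lt_or_eq, or_imp, forall_and,
            forall_eq, true_and]
          split_ifs <;> simp_all
        · simp [h]
      · simp [hm]
  convert hstep (k + 2) using 1
  funext v
  have : f v = f v₀ ↔ (f v).natDegree = k + 1 ∧ ∀ n < k + 2, (f v).coeff n = (f v₀).coeff n := by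
    constructor
    · intro h
      simp [h, hk]
    · rintro ⟨h1, h2⟩
      ext n
      by_cases hn : n < k + 2
      · exact h2 n hn
      · rw [coeff_eq_zero_of_natDegree_lt (by omega), coeff_eq_zero_of_natDegree_lt (by omega)]
  simp only [this]
  split_ifs <;> simp

end Algebra

/-! ### Adjusted representations -/

lemma coeff_pred_taylor (g : ℝ[X]) (δ : ℝ) (k : ℕ) (hk : g.natDegree = k + 1) :
    (taylor δ g).coeff k = g.coeff k + (k + 1) * g.leadingCoeff * δ := by
  rw [taylor_coeff, eval_eq_sum_range' (n := 2)]
  · simp only [Finset.sum_range_succ, Finset.sum_range_zero, hasseDeriv_coeff]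
    rw [leadingCoeff, hk]
    simp [add_comm 1 k]
  · have := natDegree_hasseDeriv_le g k
    omega

lemma adjRep_eq_taylor (g : ℝ[X]) : adjRep g = taylor (-adjShift g) g := by
  simp [adjRep, taylor_apply, sub_eq_add_neg]

lemma natDegree_adjRep (g : ℝ[X]) : (adjRep g).natDegree = g.natDegree := by
  rw [adjRep_eq_taylor, natDegree_taylor]

lemma coeff_adjRep (g : ℝ[X]) (k : ℕ) (hk : g.natDegree = k + 1) : (adjRep g).coeff k = 0 := by
  have hl : g.leadingCoeff ≠ 0 := by
    rw [Ne, leadingCoeff_eq_zero]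
    rintro rfl
    simp at hk
  have : (k : ℝ) + 1 ≠ 0 := by positivity
  rw [adjRep_eq_taylor, coeff_pred_taylor g _ k hk, adjShift, hk]
  rw [Nat.add_sub_cancel]
  push_cast
  field_simp
  ring

lemma adjShift_taylor (g : ℝ[X]) (δ : ℝ) (hg : g.natDegree ≠ 0) :
    adjShift (taylor δ g) = adjShift g + δ := by
  obtain ⟨k, hk⟩ := Nat.exists_eq_succ_of_ne_zero hg
  have hl : g.leadingCoeff ≠ 0 := by
    rw [Ne, leadingCoeff_eq_zero]
    rintro rfl
    simp at hk
  have : (k : ℝ) + 1 ≠ 0 := by positivity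
  have hlt : (taylor δ g).leadingCoeff = g.leadingCoeff := leadingCoeff_taylor δ g
  unfold adjShift
  rw [hlt, natDegree_taylor, hk]
  simp only [Nat.succ_eq_add_one, Nat.add_sub_cancel]
  rw [coeff_pred_taylor g _ k hk]
  push_cast
  field_simp

lemma polyEquiv_iff (f g : ℝ[X]) (hg : g.natDegree ≠ 0) :
    PolyEquiv f g ↔ adjRep f = adjRep g := by
  constructor
  · rintro ⟨δ, h⟩
    have : f = taylor δ g := Polynomial.funext fun x => by rw [h, taylor_eval]
    rw [this, adjRep_eq_taylor, adjRep_eq_taylor, adjShift_taylor g δ hg, taylor_taylor]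
    congr 2
    ring
  · intro h
    refine ⟨adjShift f - adjShift g, fun x => ?_⟩
    have := congrArg (eval (x + adjShift f)) h
    simp only [adjRep, eval_comp, eval_sub, eval_X, eval_C] at this
    rw [add_sub_cancel_right] at this
    rw [this, add_sub_assoc]

/-! ### Vector fields attached to tuples of polynomials -/

/-- The coordinate `q_v` as a continuous linear form on phase space. -/
def coordQ {V : Type} (v : V) : Phase V →L[ℝ] ℝ :=
  (ContinuousLinearMap.proj (R := ℝ) (φ := fun _ : V => ℝ) v).comp
    (ContinuousLinearMap.fst ℝ (V → ℝ) (V → ℝ))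

/-- The coordinate `p_v` as a continuous linear form on phase space. -/
def coordP {V : Type} (v : V) : Phase V →L[ℝ] ℝ :=
  (ContinuousLinearMap.proj (R := ℝ) (φ := fun _ : V => ℝ) v).comp
    (ContinuousLinearMap.snd ℝ (V → ℝ) (V → ℝ))

/-- The differential of `q_u - q_v`. -/
def diffQ {V : Type} (u v : V) : Phase V →L[ℝ] ℝ := coordQ u - coordQ v

lemma coordQ_apply {V : Type} (v : V) (a : Phase V) : coordQ v a = a.1 v := rfl

lemma coordP_apply {V : Type} (v : V) (a : Phase V) : coordP v a = a.2 v := rfl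

lemma diffQ_apply {V : Type} (u v : V) (a : Phase V) : diffQ u v a = a.1 u - a.1 v := rfl

lemma hasFDerivAt_eval_sub {V : Type} [Fintype V] (p : ℝ[X]) (u v : V) (δ : ℝ)
    (x : Phase V) :
    HasFDerivAt (fun y : Phase V => p.eval (y.1 u - y.1 v + δ))
      ((derivative p).eval (x.1 u - x.1 v + δ) • diffQ u v) x := by
  have h : HasFDerivAt (fun y : Phase V => y.1 u - y.1 v + δ) (diffQ u v) x :=
    ((diffQ u v).hasFDerivAt (x := x)).add_const δ
  exact (p.hasDerivAt _).comp_hasFDerivAt x h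

section Fields

variable {V : Type} [Fintype V] (G : SimpleGraph V) [DecidableRel G.Adj] (Vstar : Finset V)
  (γ : V → ℝ) (U : V → ℝ → ℝ) (Vp : V → V → Polynomial ℝ) (c : V)

/-- The vector field `∑_{v ∈ 𝒯} g_v(x_v) ∂_{p_v}`, where `x_v = q_c - q_v + δ_{cv}`. -/
def polyField (g : V → ℝ[X]) : Phase V → Phase V :=
  fun x => (0, fun v => if G.Adj c v then (g v).eval (xv Vp c v x) else 0)

lemma hasFDerivAt_polyComp (g : V → ℝ[X]) (x : Phase V) (v : V) :
    HasFDerivAt (fun y : Phase V => if G.Adj c v then (g v).eval (xv Vp c v y) else 0)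
      (if G.Adj c v then (derivative (g v)).eval (xv Vp c v x) • diffQ c v else 0) x := by
  split_ifs
  · exact hasFDerivAt_eval_sub _ _ _ _ _
  · exact hasFDerivAt_const _ _

lemma fderiv_polyField (g : V → ℝ[X]) (x a : Phase V) :
    fderiv ℝ (polyField G Vp c g) x a =
      (0, fun v => if G.Adj c v then
        (derivative (g v)).eval (xv Vp c v x) * (a.1 c - a.1 v) else 0) := by
  have h : HasFDerivAt (polyField G Vp c g) _ x :=
    (hasFDerivAt_const (0 : V → ℝ) x).prodMk
      (hasFDerivAt_pi.2 fun v => hasFDerivAt_polyComp G Vp c g x v)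
  rw [h.fderiv]
  refine Prod.ext rfl (funext fun v => ?_)
  change (if G.Adj c v then (derivative (g v)).eval (xv Vp c v x) • diffQ c v else 0) a = _
  by_cases hv : G.Adj c v <;> simp [hv, diffQ_apply]

variable [DecidableEq V]

lemma fderiv_X0 (hU : ∀ v, ContDiff ℝ (⊤ : ℕ∞) (U v)) (x a : Phase V) :
    fderiv ℝ (X0 G γ U Vp) x a =
      (a.2, fun v => -(γ v) * a.2 v - deriv (deriv (U v)) (x.1 v) * a.1 v -
        ∑ w ∈ Finset.univ.filter (fun w => G.Adj v w),
          (derivative (derivative (Vp v w))).eval (x.1 v - x.1 w) * (a.1 v - a.1 w)) := by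
  have hq : ∀ v, HasFDerivAt (fun y : Phase V => y.1 v) (coordQ v) x :=
    fun v => (coordQ v).hasFDerivAt
  have hp : ∀ v, HasFDerivAt (fun y : Phase V => y.2 v) (coordP v) x :=
    fun v => (coordP v).hasFDerivAt
  have hdU : ∀ v, HasDerivAt (deriv (U v)) (deriv (deriv (U v)) (x.1 v)) (x.1 v) := fun v =>
    (((contDiff_infty_iff_deriv.1 (hU v)).2.differentiable (by simp)) _).hasDerivAt
  have hV : ∀ v w, HasFDerivAt
      (fun y : Phase V => (derivative (Vp v w)).eval (y.1 v - y.1 w))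
      ((derivative (derivative (Vp v w))).eval (x.1 v - x.1 w) • diffQ v w) x := fun v w => by
    simpa using hasFDerivAt_eval_sub (derivative (Vp v w)) v w 0 x
  have hv : ∀ v, HasFDerivAt (fun y : Phase V => -(γ v) * y.2 v - deriv (U v) (y.1 v) -
      ∑ w ∈ Finset.univ.filter (fun w => G.Adj v w), (derivative (Vp v w)).eval (y.1 v - y.1 w))
      (-(γ v) • coordP v - deriv (deriv (U v)) (x.1 v) • coordQ v -
        ∑ w ∈ Finset.univ.filter (fun w => G.Adj v w),
          (derivative (derivative (Vp v w))).eval (x.1 v - x.1 w) • diffQ v w) x := fun v => by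
    have hUv : HasFDerivAt (fun y : Phase V => deriv (U v) (y.1 v))
        (deriv (deriv (U v)) (x.1 v) • coordQ v) x :=
      HasDerivAt.comp_hasFDerivAt (h₂ := deriv (U v)) (f := fun y : Phase V => y.1 v) x
        (hdU v) (hq v)
    exact (((hp v).const_mul (-(γ v))).sub hUv).sub (HasFDerivAt.fun_sum fun w _ => hV v w)
  have h : HasFDerivAt (X0 G γ U Vp) _ x :=
    (hasFDerivAt_snd (𝕜 := ℝ) (p := x)).prodMk (hasFDerivAt_pi.2 hv)
  rw [h.fderiv]
  refine Prod.ext rfl (funext fun v => ?_)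
  simp [diffQ_apply, coordQ_apply, coordP_apply]

lemma lieB_dq_polyField (g : V → ℝ[X]) :
    lieB (dq c) (polyField G Vp c g) = polyField G Vp c (fun v => derivative (g v)) := by
  funext x
  have h : fderiv ℝ (dq c : Phase V → Phase V) x = 0 := by
    unfold dq
    simp
  rw [lieB, fderiv_polyField, h]
  refine Prod.ext (by simp [polyField]) (funext fun v => ?_)
  by_cases hv : G.Adj c v
  · simp [polyField, hv, dq, hv.ne']
  · simp [polyField, hv]

lemma lieB_polyField_X0 (hU : ∀ v, ContDiff ℝ (⊤ : ℕ∞) (U v)) (g : V → ℝ[X]) :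
    lieB (polyField G Vp c g) (X0 G γ U Vp) = fun x =>
      (fun v => if G.Adj c v then (g v).eval (xv Vp c v x) else 0,
       fun v => -(γ v) * (if G.Adj c v then (g v).eval (xv Vp c v x) else 0) -
        (if G.Adj c v then (derivative (g v)).eval (xv Vp c v x) else 0) * (x.2 c - x.2 v)) := by
  funext x
  rw [lieB, fderiv_polyField, fderiv_X0 G γ U Vp hU]
  refine Prod.ext (by simp [polyField]) (funext fun v => ?_)
  by_cases hv : G.Adj c v <;> simp [polyField, hv, X0]

lemma lieB_lieB_polyField (hU : ∀ v, ContDiff ℝ (⊤ : ℕ∞) (U v)) (g h : V → ℝ[X]) :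
    lieB (polyField G Vp c h) (lieB (polyField G Vp c g) (X0 G γ U Vp)) =
      polyField G Vp c (fun v => derivative (g v * h v)) := by
  funext x
  rw [lieB, fderiv_polyField, lieB_polyField_X0 G γ U Vp c hU]
  have hpv : ∀ v, HasFDerivAt (fun y : Phase V => y.2 c - y.2 v) (coordP c - coordP v) x :=
    fun v => (coordP c - coordP v).hasFDerivAt
  have hg := hasFDerivAt_polyComp G Vp c g x
  have hg' := hasFDerivAt_polyComp G Vp c (fun v => derivative (g v)) x
  have hZ := (hasFDerivAt_pi.2 hg).prodMk (hasFDerivAt_pi.2 fun v =>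
    ((hg v).const_mul (-(γ v))).sub ((hg' v).mul (hpv v)))
  erw [hZ.fderiv]
  refine Prod.ext (funext fun v => ?_) (funext fun v => ?_)
  · by_cases hv : G.Adj c v <;> simp [polyField, hv, diffQ_apply]
  · by_cases hv : G.Adj c v
    · simp [polyField, hv, diffQ_apply, coordP_apply]
      ring
    · simp [polyField, hv]

/-- Tuples `g` of polynomials whose vector field `∑_{v ∈ 𝒯} g_v(x_v) ∂_{p_v}` lies in `𝓜`. -/
def admissible (hc : Controllable Vstar (X0 G γ U Vp) c) : Submodule ℝ (V → ℝ[X]) where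
  carrier := {g | MM Vstar (X0 G γ U Vp) (polyField G Vp c g)}
  zero_mem' := by
    change MM _ _ _
    convert hc.1.smul (0 : ℝ) using 1
    funext x
    refine Prod.ext (by simp [polyField]) (funext fun v => by simp [polyField])
  add_mem' := by
    intro g h hg hh
    change MM _ _ _
    convert MM.add hg hh using 1
    funext x
    refine Prod.ext (by simp [polyField]) (funext fun v => ?_)
    by_cases hv : G.Adj c v <;> simp [polyField, hv]
  smul_mem' := by
    intro a g hg
    change MM _ _ _
    convert MM.smul a hg using 1
    funext x
    refine Prod.ext (by simp [polyField]) (funext fun v => ?_)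
    by_cases hv : G.Adj c v <;> simp [polyField, hv]

lemma admissible_derivClosed (hU : ∀ v, ContDiff ℝ (⊤ : ℕ∞) (U v))
    (hc : Controllable Vstar (X0 G γ U Vp) c) :
    DerivClosed (admissible G Vstar γ U Vp c hc) where
  der g hg := by
    have := MM.lie hc.1 hg
    rwa [lieB_dq_polyField] at this
  mul g hg h hh := by
    have := MM.lie hh (MM.lieX hg)
    rwa [lieB_lieB_polyField G γ U Vp c hU] at this

/-- The bracket `[∂_{q_c}, X₀]` equals `∑_{v ∈ 𝒯} V''_{cv}(q_c - q_v) ∂_{p_v}` up to a smooth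
multiple of `∂_{p_c}`. -/
lemma ft_mem_admissible (hU : ∀ v, ContDiff ℝ (⊤ : ℕ∞) (U v))
    (hsym : ∀ u v, G.Adj u v → ∀ x : ℝ, (Vp v u).eval x = (Vp u v).eval (-x))
    (hc : Controllable Vstar (X0 G γ U Vp) c) :
    (fun v => if G.Adj c v then ft Vp c v else 0) ∈ admissible G Vstar γ U Vp c hc := by
  let F : Phase V → ℝ := fun x => deriv (deriv (U c)) (x.1 c) +
    ∑ w ∈ Finset.univ.filter (fun w => G.Adj c w),
      (derivative (derivative (Vp c w))).eval (x.1 c - x.1 w)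
  have hF : ContDiff ℝ (⊤ : ℕ∞) F := by
    have h2 : ContDiff ℝ (⊤ : ℕ∞) (deriv (deriv (U c))) :=
      (contDiff_infty_iff_deriv.1 (contDiff_infty_iff_deriv.1 (hU c)).2).2
    have hq : ∀ v, ContDiff ℝ (⊤ : ℕ∞) (fun x : Phase V => x.1 v) := fun v => by fun_prop
    refine (h2.comp (hq c)).add (ContDiff.sum fun w _ => ?_)
    exact ((derivative (derivative (Vp c w))).contDiff_aeval (𝕜 := ℝ) _).comp ((hq c).sub (hq w))
  have hmem := MM.add (MM.lieX hc.1) (MM.mulS F hF hc.2)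
  change MM _ _ _
  convert hmem using 1
  funext x
  have hd : fderiv ℝ (dq c : Phase V → Phase V) x = 0 := by
    unfold dq
    simp
  rw [Pi.add_apply, lieB, fderiv_X0 G γ U Vp hU, hd]
  refine Prod.ext (by simp [polyField, dq, dp]) (funext fun v => ?_)
  by_cases hvc : v = c
  · subst hvc
    have : ∀ w ∈ Finset.univ.filter (fun w => G.Adj v w),
        (derivative (derivative (Vp v w))).eval (x.1 v - x.1 w) *
          ((Pi.single v 1 : V → ℝ) v - (Pi.single v 1 : V → ℝ) w) =
        (derivative (derivative (Vp v w))).eval (x.1 v - x.1 w) := by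
      intro w hw
      have : w ≠ v := (Finset.mem_filter.1 hw).2.ne'
      simp [this]
    simp only [dq, dp, Prod.snd_add, Prod.snd_sub, Pi.add_apply, Pi.sub_apply]
    rw [Finset.sum_congr rfl this]
    simp [polyField, F]
  · by_cases hv : G.Adj c v
    · -- The symmetry of the potentials gives `V''_{vc}(y) = V''_{cv}(-y)`.
      have hs : Vp v c = (Vp c v).comp (-X) := Polynomial.funext fun y => by
        rw [hsym c v hv]
        simp
      have hs2 : (derivative (derivative (Vp v c))).eval (x.1 v - x.1 c) =
          (derivative (derivative (Vp c v))).eval (x.1 c - x.1 v) := by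
        rw [hs]
        simp [derivative_comp]
      have hsum : ∑ w ∈ Finset.univ.filter (fun w => G.Adj v w),
          (derivative (derivative (Vp v w))).eval (x.1 v - x.1 w) *
            ((Pi.single c 1 : V → ℝ) v - (Pi.single c 1 : V → ℝ) w) =
          -(derivative (derivative (Vp c v))).eval (x.1 c - x.1 v) := by
        rw [Finset.sum_eq_single_of_mem c (by simpa using hv.symm)]
        · rw [hs2]
          simp [hvc]
        · intro w _ hw
          simp [hvc, hw]
      simp only [dq, dp, Prod.snd_add, Prod.snd_sub, Pi.add_apply, Pi.sub_apply]
      rw [hsum]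
      simp [polyField, hv, hvc, ft, adjRep, xv, eval_comp]
    · have hsum : ∑ w ∈ Finset.univ.filter (fun w => G.Adj v w),
          (derivative (derivative (Vp v w))).eval (x.1 v - x.1 w) *
            ((Pi.single c 1 : V → ℝ) v - (Pi.single c 1 : V → ℝ) w) = 0 := by
        refine Finset.sum_eq_zero fun w hw => ?_
        have : w ≠ c := by
          rintro rfl
          exact hv (Finset.mem_filter.1 hw).2.symm
        simp [hvc, this]
      simp only [dq, dp, Prod.snd_add, Prod.snd_sub, Pi.add_apply, Pi.sub_apply]
      rw [hsum]
      simp [polyField, hv, hvc]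

end Fields

/-- Theorem 4.3, second part. If `c` is controllable, then with
`δ_{cv}` the adjusting shifts, for every equivalence class `𝒯_i` of neighbors of `c`
the vector field `∑_{v∈𝒯_i} (q_c − q_v + δ_{cv}) ∂_{p_v}` belongs to `𝓜`. -/
theorem equivClass_x_field_mem
    {V : Type} [Fintype V] [DecidableEq V] (G : SimpleGraph V) [DecidableRel G.Adj]
    (Vstar : Finset V) (γ : V → ℝ) (U : V → ℝ → ℝ) (Vp : V → V → Polynomial ℝ)
    (hγpos : ∀ v ∈ Vstar, 0 < γ v) (hγ0 : ∀ v ∉ Vstar, γ v = 0)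
    (hU : ∀ v, ContDiff ℝ (⊤ : ℕ∞) (U v))
    (hsym : ∀ u v, G.Adj u v → ∀ x : ℝ, (Vp v u).eval x = (Vp u v).eval (-x))
    (hdeg : ∀ u v, G.Adj u v → 3 ≤ (Vp u v).natDegree)
    (c : V) (hc : Controllable Vstar (X0 G γ U Vp) c) :
    ∀ v₀ ∈ Tset G c,
      MM Vstar (X0 G γ U Vp)
        (fun x => ((0 : V → ℝ),
          ∑ w ∈ (Tset G c).filter (fun w =>
            PolyEquiv (derivative (derivative (Vp c w))) (derivative (derivative (Vp c v₀)))),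
            Pi.single w (xv Vp c w x))) := by
  intro v₀ hv₀
  have hadj₀ : G.Adj c v₀ := (Finset.mem_filter.1 hv₀).2
  have hdeg2 : ∀ v, G.Adj c v → (derivative (derivative (Vp c v))).natDegree ≠ 0 := by
    intro v hv
    rw [natDegree_derivative, natDegree_derivative]
    have := hdeg c v hv
    omega
  have hft : ∀ v, (ft Vp c v).natDegree = (derivative (derivative (Vp c v))).natDegree :=
    fun v => natDegree_adjRep _
  have key := (admissible_derivClosed G Vstar γ U Vp c hU hc).level_mem
    (ft_mem_admissible G Vstar γ U Vp c hU hsym hc)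
    (fun v k hk => by
      by_cases hv : G.Adj c v
      · simp only [hv, if_true] at hk ⊢
        exact coeff_adjRep _ k (by rw [← hft, hk])
      · simp [hv])
    v₀ (by simpa [hadj₀, hft] using hdeg2 v₀ hadj₀)
  change MM _ _ _ at key
  convert key using 1
  funext x
  refine Prod.ext rfl (funext fun v => ?_)
  simp only [polyField, Finset.sum_apply, Finset.sum_pi_single, Finset.mem_filter, Tset,
    Finset.mem_univ, true_and, hadj₀, if_true, polyEquiv_iff _ _ (hdeg2 v₀ hadj₀)]
  by_cases hv : G.Adj c v
  · by_cases he : ft Vp c v = ft Vp c v₀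
    · have he' : adjRep (derivative (derivative (Vp c v))) =
        adjRep (derivative (derivative (Vp c v₀))) := he
      simp [hv, he, he']
    · have he' : ¬ adjRep (derivative (derivative (Vp c v))) =
        adjRep (derivative (derivative (Vp c v₀))) := he
      simp [hv, he, he']
  · simp [hv]
end
end

section
/- Assume the vertex c is controllable. Then the vector field ∑_{v∈𝒯} V''_{cv}(q_c − q_v) ∂_{p_v} belongs to 𝓜. -/
/-! The bracket `[∂_{q_c}, X₀]` is the derivative of `X₀` in the direction `q_c`. Its `q`-part
vanishes. Its `p_v`-component for `v ≠ c` is `V''_{vc}(q_v − q_c) = V''_{cv}(q_c − q_v)` if `v` is a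
neighbor of `c`, and `0` otherwise; its `p_c`-component is a smooth function `-g` with
`g = U_c''(q_c) + ∑_{w ~ c} V''_{cw}(q_c − q_w)`. Adding `g ∂_{p_c}`, which lies in `𝓜`
because `c` is controllable, gives the field of the theorem. The derivative of `X₀` is computed in
`fderiv_X0_dq`, the symmetry of the second derivatives in `eval_derivative2_symm`. -/

open scoped Classical
open Polynomial

noncomputable section

/-- The symmetry of the interaction potentials passes to their second derivatives. -/
lemma eval_derivative2_symm {P Q : Polynomial ℝ}
    (h : ∀ x : ℝ, Q.eval x = P.eval (-x)) (x : ℝ) :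
    (derivative (derivative Q)).eval x = (derivative (derivative P)).eval (-x) := by
  have hQ : Q = P.comp (-Polynomial.X) := Polynomial.funext fun y => by simp [h]
  simp [hQ, derivative_comp]

lemma differentiable_X0 {V : Type} [Fintype V] [DecidableEq V] (G : SimpleGraph V)
    [DecidableRel G.Adj] (γ : V → ℝ) (U : V → ℝ → ℝ) (Vp : V → V → Polynomial ℝ)
    (hU : ∀ v, ContDiff ℝ (⊤ : ℕ∞) (U v)) : Differentiable ℝ (X0 G γ U Vp) := by
  have hU' : ∀ v, Differentiable ℝ (deriv (U v)) := fun v =>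
    ((contDiff_infty_iff_deriv.1 (hU v)).2).differentiable (by simp)
  unfold X0
  refine differentiable_snd.prodMk (differentiable_pi.2 fun v => ?_)
  have h1 : Differentiable ℝ (fun x : Phase V => deriv (U v) (x.1 v)) :=
    (hU' v).comp (by fun_prop)
  have h2 : ∀ w, Differentiable ℝ
      (fun x : Phase V => (derivative (Vp v w)).eval (x.1 v - x.1 w)) := fun w =>
    (derivative (Vp v w)).differentiable.comp (by fun_prop)
  fun_prop

/-- The derivative of the drift in the direction `q_c`, before any use of the symmetry of the
interaction potentials. -/
lemma fderiv_X0_dq {V : Type} [Fintype V] [DecidableEq V] (G : SimpleGraph V)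
    [DecidableRel G.Adj] (γ : V → ℝ) (U : V → ℝ → ℝ) (Vp : V → V → Polynomial ℝ)
    (hU : ∀ v, ContDiff ℝ (⊤ : ℕ∞) (U v)) (c : V) (x : Phase V) :
    fderiv ℝ (X0 G γ U Vp) x (Pi.single c 1, 0) =
      (0, fun v => -(deriv (deriv (U v)) (x.1 v) * (Pi.single c 1 : V → ℝ) v) -
        ∑ w ∈ Finset.univ.filter (fun w => G.Adj v w),
          (derivative (derivative (Vp v w))).eval (x.1 v - x.1 w) *
            ((Pi.single c 1 : V → ℝ) v - (Pi.single c 1 : V → ℝ) w)) := by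
  have hU' : ∀ v, Differentiable ℝ (deriv (U v)) := fun v =>
    ((contDiff_infty_iff_deriv.1 (hU v)).2).differentiable (by simp)
  rw [← (differentiable_X0 G γ U Vp hU x).lineDeriv_eq_fderiv]
  refine HasLineDerivAt.lineDeriv ?_
  unfold HasLineDerivAt X0
  set e : V → ℝ := Pi.single c 1
  have hq : ∀ v, HasDerivAt (fun t : ℝ => (x + t • (e, (0 : V → ℝ))).1 v) (e v) 0 := fun v => by
    simpa using ((hasDerivAt_id (0 : ℝ)).mul_const (e v)).const_add (x.1 v)
  refine HasDerivAt.prodMk ?_ (hasDerivAt_pi.2 fun v => ?_)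
  · simpa using hasDerivAt_const (0 : ℝ) x.2
  · have hp : HasDerivAt (fun t : ℝ => -(γ v) * (x + t • (e, (0 : V → ℝ))).2 v) 0 0 := by
      simpa using hasDerivAt_const (0 : ℝ) (-(γ v) * x.2 v)
    have h1 : HasDerivAt (fun t : ℝ => deriv (U v) ((x + t • (e, (0 : V → ℝ))).1 v))
        (deriv (deriv (U v)) (x.1 v) * e v) 0 := by
      refine HasDerivAt.comp (h₂ := deriv (U v)) (0 : ℝ) ?_ (hq v)
      simpa using (hU' v (x.1 v)).hasDerivAt
    have h2 : ∀ w, HasDerivAt (fun t : ℝ => (derivative (Vp v w)).eval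
        ((x + t • (e, (0 : V → ℝ))).1 v - (x + t • (e, (0 : V → ℝ))).1 w))
        ((derivative (derivative (Vp v w))).eval (x.1 v - x.1 w) * (e v - e w)) 0 := fun w => by
      refine HasDerivAt.comp (h₂ := fun y => (derivative (Vp v w)).eval y) (0 : ℝ) ?_
        ((hq v).sub (hq w))
      simpa using (derivative (Vp v w)).hasDerivAt (x.1 v - x.1 w)
    have := (hp.sub h1).sub (HasDerivAt.fun_sum
      (u := Finset.univ.filter (fun w => G.Adj v w)) fun w _ => h2 w)
    rw [zero_sub] at this
    exact this

/-- Lemma 4.4. If `c` is controllable, then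
`∑_{v∈𝒯} V''_{cv}(q_c − q_v) ∂_{p_v} ∈ 𝓜`. -/
theorem second_derivative_field_mem
    {V : Type} [Fintype V] [DecidableEq V] (G : SimpleGraph V) [DecidableRel G.Adj]
    (Vstar : Finset V) (γ : V → ℝ) (U : V → ℝ → ℝ) (Vp : V → V → Polynomial ℝ)
    (hγpos : ∀ v ∈ Vstar, 0 < γ v) (hγ0 : ∀ v ∉ Vstar, γ v = 0)
    (hU : ∀ v, ContDiff ℝ (⊤ : ℕ∞) (U v))
    (hsym : ∀ u v, G.Adj u v → ∀ x : ℝ, (Vp v u).eval x = (Vp u v).eval (-x))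
    (hdeg : ∀ u v, G.Adj u v → 3 ≤ (Vp u v).natDegree)
    (c : V) (hc : Controllable Vstar (X0 G γ U Vp) c) :
    MM Vstar (X0 G γ U Vp)
      (fun x => ((0 : V → ℝ),
        ∑ w ∈ Tset G c,
          Pi.single w ((derivative (derivative (Vp c w))).eval (x.1 c - x.1 w)))) := by
  set g : Phase V → ℝ := fun x => deriv (deriv (U c)) (x.1 c) +
    ∑ w ∈ Tset G c, (derivative (derivative (Vp c w))).eval (x.1 c - x.1 w) with hg
  have hgs : ContDiff ℝ (⊤ : ℕ∞) g := by
    have hU2 : ContDiff ℝ (⊤ : ℕ∞) (deriv (deriv (U c))) :=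
      (contDiff_infty_iff_deriv.1 (contDiff_infty_iff_deriv.1 (hU c)).2).2
    refine ContDiff.add (hU2.comp (by fun_prop)) (ContDiff.sum fun w _ => ?_)
    simp only [← Polynomial.coe_aeval_eq_eval]
    exact (Polynomial.contDiff_aeval (derivative (derivative (Vp c w))) _).comp
      (f := fun x : Phase V => x.1 c - x.1 w) (by fun_prop)
  have key := (hc.1.lieX).add (MM.mulS g hgs hc.2)
  convert key using 1
  funext x
  have hlie : lieB (dq c) (X0 G γ U Vp) x =
      fderiv ℝ (X0 G γ U Vp) x (Pi.single c 1, 0) := by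
    simp [lieB, show dq c = fun _ : Phase V => (Pi.single c (1 : ℝ), (0 : V → ℝ)) from rfl]
  rw [Pi.add_apply, hlie, fderiv_X0_dq G γ U Vp hU]
  refine Prod.ext (by simp [dp]) ?_
  funext v
  simp only [dp, Prod.snd_add, Prod.smul_snd, Pi.add_apply, Pi.smul_apply, Finset.sum_apply,
    smul_eq_mul]
  by_cases hv : v = c
  · subst hv
    have hL : ∑ w ∈ Tset G v, (Pi.single w ((derivative (derivative (Vp v w))).eval
        (x.1 v - x.1 w)) : V → ℝ) v = 0 := by
      refine Finset.sum_eq_zero fun w hw => ?_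
      have hvw : v ≠ w := (Finset.mem_filter.1 hw).2.ne
      simp [hvw]
    have hR : ∑ w ∈ Finset.univ.filter (fun w => G.Adj v w),
        (derivative (derivative (Vp v w))).eval (x.1 v - x.1 w) *
          ((Pi.single v 1 : V → ℝ) v - (Pi.single v 1 : V → ℝ) w) =
        ∑ w ∈ Tset G v, (derivative (derivative (Vp v w))).eval (x.1 v - x.1 w) := by
      refine Finset.sum_congr rfl fun w hw => ?_
      have hwv : w ≠ v := (Finset.mem_filter.1 hw).2.ne'
      simp [hwv]
    rw [hL, hR, hg]
    simp
  · have hcomp : (Pi.single c (1 : ℝ) : V → ℝ) v = 0 := by simp [hv]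
    have hL : ∑ w ∈ Tset G c, (Pi.single w ((derivative (derivative (Vp c w))).eval
        (x.1 c - x.1 w)) : V → ℝ) v =
        if G.Adj c v then (derivative (derivative (Vp c v))).eval (x.1 c - x.1 v) else 0 := by
      simp [Pi.single_apply, Tset]
    have hR : ∑ w ∈ Finset.univ.filter (fun w => G.Adj v w),
        (derivative (derivative (Vp v w))).eval (x.1 v - x.1 w) *
          (0 - (Pi.single c 1 : V → ℝ) w) =
        if G.Adj v c then -(derivative (derivative (Vp v c))).eval (x.1 v - x.1 c) else 0 := by
      simp only [Pi.single_apply]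
      split_ifs with hadj <;> simp [hadj]
    rw [hcomp, hL, hR]
    simp only [G.adj_comm v c]
    split_ifs with hadj
    · rw [eval_derivative2_symm (hsym c v hadj), neg_sub]
      simp
    · simp
end
end
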